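/- arXiv:2602.06944 — 2 statements merged into one kernel-verified Lean document; each statement's English description precedes it below -/
import Mathlib

section
/- Let P* be a symmetric positive definite solution of the derivative-feedback algebraic Riccati equation. Then for every stabilizing derivative-feedback gain K and every symmetric positive definite solution P of the policy-evaluation equation for K, the matrix P − P* is positive semidefinite; that is, the Riccati solution is a Loewner lower bound for the value matrix of any stabilizing policy. -/
open Matrix MeasureTheory Filter Topology

/-- A real square matrix is Hurwitz if every complex eigenvalue has strictly
negative real part. -/
def IsHurwitz {n : ℕ} (M : Matrix (Fin n) (Fin n) ℝ) : Prop :=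
  ∀ μ ∈ spectrum ℂ (M.map (Complex.ofReal)), μ.re < 0

/-- A derivative-feedback gain `K` is stabilizing if `I + B * K` is invertible
and `(I + B * K)⁻¹ * A` is Hurwitz. -/
def IsStabilizing {n m : ℕ} (A : Matrix (Fin n) (Fin n) ℝ) (B : Matrix (Fin n) (Fin m) ℝ)
    (K : Matrix (Fin m) (Fin n) ℝ) : Prop :=
  IsUnit (1 + B * K) ∧ IsHurwitz ((1 + B * K)⁻¹ * A)

/-- The policy-evaluation (Lyapunov) equation for the gain `K`:
`P (A⁻¹(I + BK)) + (A⁻¹(I + BK))ᵀ P + Q + Kᵀ R K = 0`. -/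
def PolicyEval {n m : ℕ} (A : Matrix (Fin n) (Fin n) ℝ) (B : Matrix (Fin n) (Fin m) ℝ)
    (Q : Matrix (Fin n) (Fin n) ℝ) (R : Matrix (Fin m) (Fin m) ℝ)
    (K : Matrix (Fin m) (Fin n) ℝ) (P : Matrix (Fin n) (Fin n) ℝ) : Prop :=
  P * (A⁻¹ * (1 + B * K)) + (A⁻¹ * (1 + B * K))ᵀ * P + Q + Kᵀ * R * K = 0

/-- The policy-improvement update: `K⁺ = −R⁻¹ Bᵀ A⁻ᵀ P`. -/
noncomputable def ImprovedGain {n m : ℕ} (A : Matrix (Fin n) (Fin n) ℝ) (B : Matrix (Fin n) (Fin m) ℝ)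
    (R : Matrix (Fin m) (Fin m) ℝ) (P : Matrix (Fin n) (Fin n) ℝ) :
    Matrix (Fin m) (Fin n) ℝ :=
  -(R⁻¹ * Bᵀ * (A⁻¹)ᵀ * P)

/-- The derivative-feedback algebraic Riccati equation:
`P A⁻¹ + A⁻ᵀ P − P A⁻¹ B R⁻¹ Bᵀ A⁻ᵀ P + Q = 0`. -/
def SolvesARE {n m : ℕ} (A : Matrix (Fin n) (Fin n) ℝ) (B : Matrix (Fin n) (Fin m) ℝ)
    (Q : Matrix (Fin n) (Fin n) ℝ) (R : Matrix (Fin m) (Fin m) ℝ)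
    (P : Matrix (Fin n) (Fin n) ℝ) : Prop :=
  P * A⁻¹ + (A⁻¹)ᵀ * P - P * A⁻¹ * B * R⁻¹ * Bᵀ * (A⁻¹)ᵀ * P + Q = 0

/-!
Let `X = P - P*` and `H = (I + BK)⁻¹A`, so that `H⁻¹ = A⁻¹(I + BK)`. Completing the square in the
Riccati equation shows that `X` solves the Lyapunov equation
`X H⁻¹ + H⁻ᵀ X = -(K - K*)ᵀ R (K - K*)` with `K* = -R⁻¹BᵀA⁻ᵀP*`; conjugating by `H` gives
`X H + Hᵀ X ≤ 0`. The Cayley transform `C = (I + H)(I - H)⁻¹` turns this into the Stein inequality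
`Cᵀ X C ≤ X`, and it has spectrum in the open unit disc because `H` is Hurwitz. Hence `Cᵏ → 0` by
Gelfand's formula, and iterating the inequality gives `X ≥ (Cᵏ)ᵀ X Cᵏ → 0`.
-/

section StarOrderedRing

variable {R : Type*} [Ring R] [StarRing R] [PartialOrder R] [StarOrderedRing R]

lemma star_pow_mul_mul_pow_le {c x : R} (h : star c * x * c ≤ x) (k : ℕ) :
    star (c ^ k) * x * c ^ k ≤ x := by
  induction k with
  | zero => simp
  | succ k ih =>
    calc star (c ^ (k + 1)) * x * c ^ (k + 1)
        = star c * (star (c ^ k) * x * c ^ k) * c := by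
          rw [pow_succ, star_mul]
          noncomm_ring
      _ ≤ star c * x * c := star_left_conjugate_le_conjugate ih c
      _ ≤ x := h

lemma nonneg_of_star_mul_mul_le [TopologicalSpace R] [ContinuousMul R] [ContinuousStar R]
    [ClosedIicTopology R] {c x : R} (hc : Tendsto (c ^ ·) atTop (𝓝 0))
    (h : star c * x * c ≤ x) : 0 ≤ x := by
  have hlim : Tendsto (fun k ↦ star (c ^ k) * x * c ^ k) atTop (𝓝 0) := by
    simpa only [star_zero, zero_mul] using (hc.star.mul_const x).mul hc
  exact le_of_tendsto' hlim (star_pow_mul_mul_pow_le h)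

end StarOrderedRing

section Cayley

/-- The Cayley transform `(1 + a)(1 - a)⁻¹`, which carries the open left half-plane to the open
unit disc. It takes the junk value `0` when `1 - a` is not invertible. -/
noncomputable def cayleyTransform {R : Type*} [Ring R] (a : R) : R :=
  (1 + a) * Ring.inverse (1 - a)

lemma cayleyTransform_mul_one_sub {R : Type*} [Ring R] {a : R} (h : IsUnit (1 - a)) :
    cayleyTransform a * (1 - a) = 1 + a := by
  rw [cayleyTransform, mul_assoc, Ring.inverse_mul_cancel _ h, mul_one]

lemma star_cayleyTransform_mul_mul_le {R : Type*} [Ring R] [StarRing R] [PartialOrder R]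
    [StarOrderedRing R] {a x : R} (ha : IsUnit (1 - a)) (h : 0 ≤ -(x * a + star a * x)) :
    star (cayleyTransform a) * x * cayleyTransform a ≤ x := by
  set b := Ring.inverse (1 - a)
  set s := star b * -(x * a + star a * x) * b with hs
  have hs_nonneg : 0 ≤ s := star_left_conjugate_nonneg h b
  have hunit : (1 - a) * b = 1 := Ring.mul_inverse_cancel _ ha
  have hdefect : x - star (cayleyTransform a) * x * cayleyTransform a = s + s :=
    calc x - star (cayleyTransform a) * x * cayleyTransform a
        = star ((1 - a) * b) * x * ((1 - a) * b) - star ((1 + a) * b) * x * ((1 + a) * b) := by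
          rw [hunit, star_one, one_mul, mul_one, cayleyTransform]
      _ = s + s := by
          simp only [hs, star_mul, star_sub, star_add, star_one]
          noncomm_ring
  exact sub_nonneg.mp (hdefect ▸ add_nonneg hs_nonneg hs_nonneg)

lemma re_sub_one_div_add_one_nonneg {z : ℂ} (hz : 1 ≤ ‖z‖) :
    0 ≤ ((z - 1) / (z + 1)).re := by
  have h : 1 ≤ z.re * z.re + z.im * z.im := by
    rw [← Complex.normSq_apply, Complex.normSq_eq_norm_sq]
    exact one_le_pow₀ hz
  rw [Complex.div_re, ← add_div]
  refine div_nonneg ?_ (Complex.normSq_nonneg _)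
  simp only [Complex.sub_re, Complex.add_re, Complex.sub_im, Complex.add_im, Complex.one_re,
    Complex.one_im]
  linarith

variable {A : Type*} [Ring A] [Algebra ℂ A] {a : A}

lemma isUnit_one_sub_of_spectrum_re_neg (ha : ∀ μ ∈ spectrum ℂ a, μ.re < 0) :
    IsUnit (1 - a) := by
  have h : (1 : ℂ) ∉ spectrum ℂ a := fun h ↦ (ha 1 h).not_gt (by simp)
  simpa only [map_one] using spectrum.notMem_iff.mp h

lemma norm_lt_one_of_mem_spectrum_cayleyTransform (ha : ∀ μ ∈ spectrum ℂ a, μ.re < 0) {z : ℂ}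
    (hz : z ∈ spectrum ℂ (cayleyTransform a)) : ‖z‖ < 1 := by
  by_contra! hnorm
  have hu := isUnit_one_sub_of_spectrum_re_neg ha
  have hmul : (algebraMap ℂ A z - cayleyTransform a) * (1 - a) =
      algebraMap ℂ A (z - 1) - (z + 1) • a := by
    rw [sub_mul, cayleyTransform_mul_one_sub hu, Algebra.smul_def, map_sub, map_add, map_one]
    noncomm_ring
  suffices h : IsUnit (algebraMap ℂ A (z - 1) - (z + 1) • a) by
    rw [← hmul, ← hu.unit_spec, Units.isUnit_mul_units] at h
    exact hz h
  rcases eq_or_ne (z + 1) 0 with hz1 | hz1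
  · have hz2 : z - 1 ≠ 0 := by
      rw [eq_neg_of_add_eq_zero_left hz1]
      norm_num
    simpa only [hz1, zero_smul, sub_zero] using hz2.isUnit.map (algebraMap ℂ A)
  · have hw : (z - 1) / (z + 1) ∉ spectrum ℂ a := fun h ↦
      (ha _ h).not_ge (re_sub_one_div_add_one_nonneg hnorm)
    have hfactor : algebraMap ℂ A (z - 1) - (z + 1) • a =
        (z + 1) • (algebraMap ℂ A ((z - 1) / (z + 1)) - a) := by
      rw [smul_sub, Algebra.algebraMap_eq_smul_one, Algebra.algebraMap_eq_smul_one, smul_smul,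
        mul_div_cancel₀ _ hz1]
    rw [hfactor]
    exact (spectrum.notMem_iff.mp hw).smul (Units.mk0 _ hz1)

end Cayley

section Lyapunov

variable {A : Type*} [NormedRing A] [NormedAlgebra ℂ A] [CompleteSpace A]

lemma tendsto_pow_atTop_nhds_zero_of_spectrum_norm_lt_one {a : A}
    (ha : ∀ z ∈ spectrum ℂ a, ‖z‖ < 1) : Tendsto (a ^ ·) atTop (𝓝 0) := by
  nontriviality A
  have hrad : spectralRadius ℂ a < (1 : NNReal) := spectrum.spectralRadius_lt_of_forall_lt a ha
  obtain ⟨r, har, hr⟩ := ENNReal.lt_iff_exists_nnreal_btwn.mp hrad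
  have hbound : ∀ᶠ k : ℕ in atTop, ‖a ^ k‖₊ ≤ r ^ k := by
    have hgelfand := spectrum.pow_nnnorm_pow_one_div_tendsto_nhds_spectralRadius a
    filter_upwards [hgelfand.eventually_lt_const har, eventually_gt_atTop 0] with k hk hk0
    rw [one_div, ENNReal.rpow_inv_lt_iff (by positivity), ENNReal.rpow_natCast] at hk
    exact_mod_cast hk.le
  have hpow : Tendsto (fun k : ℕ ↦ (r : ℝ) ^ k) atTop (𝓝 0) :=
    tendsto_pow_atTop_nhds_zero_of_lt_one r.2 (by exact_mod_cast hr)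
  exact squeeze_zero_norm' (hbound.mono fun k hk ↦ by exact_mod_cast hk) hpow

lemma nonneg_of_lyapunov [StarRing A] [ContinuousStar A] [PartialOrder A] [StarOrderedRing A]
    [ClosedIicTopology A] {a x : A} (ha : ∀ μ ∈ spectrum ℂ a, μ.re < 0)
    (h : 0 ≤ -(x * a + star a * x)) : 0 ≤ x := by
  have hstein := star_cayleyTransform_mul_mul_le (isUnit_one_sub_of_spectrum_re_neg ha) h
  refine nonneg_of_star_mul_mul_le ?_ hstein
  exact tendsto_pow_atTop_nhds_zero_of_spectrum_norm_lt_one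
    fun z ↦ norm_lt_one_of_mem_spectrum_cayleyTransform ha

end Lyapunov

section RealMatrix

open scoped ComplexOrder MatrixOrder

lemma posSemidef_map_algebraMap_real_iff {ι 𝕜 : Type*} [Finite ι] [RCLike 𝕜] {S : Matrix ι ι ℝ} :
    (S.map (algebraMap ℝ 𝕜)).PosSemidef ↔ S.PosSemidef := by
  have := Fintype.ofFinite ι
  have hstar : Function.Semiconj (algebraMap ℝ 𝕜) star star := fun r ↦
    (RCLike.conj_ofReal r).symm
  constructor <;> intro h
  · refine .of_dotProduct_mulVec_nonneg
      ((isHermitian_map_iff hstar (algebraMap ℝ 𝕜).injective).mp h.isHermitian) fun v ↦ ?_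
    have hv := h.dotProduct_mulVec_nonneg (algebraMap ℝ 𝕜 ∘ v)
    have hcast : star (algebraMap ℝ 𝕜 ∘ v) ⬝ᵥ (S.map (algebraMap ℝ 𝕜) *ᵥ (algebraMap ℝ 𝕜 ∘ v)) =
        algebraMap ℝ 𝕜 (star v ⬝ᵥ (S *ᵥ v)) := by
      have hmulVec : S.map (algebraMap ℝ 𝕜) *ᵥ (algebraMap ℝ 𝕜 ∘ v) = algebraMap ℝ 𝕜 ∘ (S *ᵥ v) :=
        funext fun i ↦ (RingHom.map_mulVec _ S v i).symm
      have hstarv : star (algebraMap ℝ 𝕜 ∘ v) = algebraMap ℝ 𝕜 ∘ star v :=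
        funext fun i ↦ (hstar (v i)).symm
      rw [hmulVec, hstarv, RingHom.map_dotProduct]
    rw [hcast] at hv
    exact RCLike.ofReal_nonneg.mp hv
  · classical
    obtain ⟨T, rfl⟩ := CStarAlgebra.nonneg_iff_eq_star_mul_self.mp h.nonneg
    rw [Matrix.map_mul, star_eq_conjTranspose, conjTranspose_map _ hstar]
    exact posSemidef_conjTranspose_mul_self _

namespace IsHurwitz

variable {n : ℕ} {H X : Matrix (Fin n) (Fin n) ℝ}

open scoped Matrix.Norms.L2Operator in
lemma posSemidef_of_lyapunov (hH : IsHurwitz H) (h : (-(X * H + Hᵀ * X)).PosSemidef) :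
    X.PosSemidef := by
  rw [← posSemidef_map_algebraMap_real_iff (𝕜 := ℂ), ← nonneg_iff_posSemidef] at h ⊢
  refine nonneg_of_lyapunov hH ?_
  convert h using 1
  ext i j
  simp [Matrix.mul_apply, star_eq_conjTranspose]

lemma isUnit (hH : IsHurwitz H) : IsUnit H := by
  have h0 : (0 : ℂ) ∉ spectrum ℂ (H.map Complex.ofReal) := fun h ↦ (hH 0 h).false
  have hdet : IsUnit (Complex.ofRealHom H.det) := by
    rw [RingHom.map_det]
    exact (isUnit_iff_isUnit_det _).mp (spectrum.zero_notMem_iff ℂ |>.mp h0)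
  exact (isUnit_iff_isUnit_det H).mpr ((isUnit_map_iff _ _).mp hdet)

lemma posSemidef_of_lyapunov_inv (hH : IsHurwitz H)
    (h : (-(X * H⁻¹ + H⁻¹ᵀ * X)).PosSemidef) : X.PosSemidef := by
  refine hH.posSemidef_of_lyapunov ?_
  have hinv : H⁻¹ * H = 1 := nonsing_inv_mul H ((isUnit_iff_isUnit_det H).mp hH.isUnit)
  have hinv' : Hᵀ * H⁻¹ᵀ = 1 := by rw [← transpose_mul, hinv, transpose_one]
  have hconj : -(X * H + Hᵀ * X) = Hᴴ * -(X * H⁻¹ + H⁻¹ᵀ * X) * H :=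
    calc -(X * H + Hᵀ * X) = -(Hᵀ * X * (H⁻¹ * H) + Hᵀ * H⁻¹ᵀ * X * H) := by
          rw [hinv, hinv', Matrix.mul_one, Matrix.one_mul, add_comm]
      _ = Hᴴ * -(X * H⁻¹ + H⁻¹ᵀ * X) * H := by
          rw [conjTranspose_eq_transpose_of_trivial]
          noncomm_ring
  exact hconj ▸ h.conjTranspose_mul_mul_same H

end IsHurwitz

end RealMatrix

section Riccati

variable {n m : ℕ} {A : Matrix (Fin n) (Fin n) ℝ} {B : Matrix (Fin n) (Fin m) ℝ}
  {Q : Matrix (Fin n) (Fin n) ℝ} {R : Matrix (Fin m) (Fin m) ℝ}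
  {K : Matrix (Fin m) (Fin n) ℝ} {P X : Matrix (Fin n) (Fin n) ℝ}

lemma IsStabilizing.posSemidef_of_lyapunov (hK : IsStabilizing A B K)
    (h : (-(X * (A⁻¹ * (1 + B * K)) + (A⁻¹ * (1 + B * K))ᵀ * X)).PosSemidef) :
    X.PosSemidef := by
  have hinv : ((1 + B * K)⁻¹ * A)⁻¹ = A⁻¹ * (1 + B * K) := by
    rw [Matrix.mul_inv_rev, nonsing_inv_nonsing_inv _ ((isUnit_iff_isUnit_det _).mp hK.1)]
  exact hK.2.posSemidef_of_lyapunov_inv (hinv ▸ h)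

lemma mul_improvedGain (hR : IsUnit R) : R * ImprovedGain A B R P = -(Bᵀ * A⁻¹ᵀ * P) := by
  simp only [ImprovedGain, Matrix.mul_neg, Matrix.mul_assoc]
  rw [mul_nonsing_inv_cancel_left _ _ ((isUnit_iff_isUnit_det R).mp hR)]

lemma transpose_improvedGain_mul (hR : IsUnit R) (hRsymm : R.IsSymm) (hP : P.IsSymm) :
    (ImprovedGain A B R P)ᵀ * R = -(P * A⁻¹ * B) := by
  simpa only [transpose_mul, transpose_neg, transpose_transpose, hRsymm.eq, hP.eq,
    Matrix.mul_assoc] using congrArg transpose (mul_improvedGain (A := A) (B := B) (P := P) hR)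

lemma SolvesARE.improvedGain_quadratic (hARE : SolvesARE A B Q R P) (hR : IsUnit R)
    (hRsymm : R.IsSymm) (hP : P.IsSymm) :
    (ImprovedGain A B R P)ᵀ * R * ImprovedGain A B R P = P * A⁻¹ + A⁻¹ᵀ * P + Q := by
  have h : P * A⁻¹ + A⁻¹ᵀ * P + Q = P * A⁻¹ * B * R⁻¹ * Bᵀ * A⁻¹ᵀ * P := by
    rw [← sub_eq_zero, ← hARE]
    abel
  rw [h, transpose_improvedGain_mul hR hRsymm hP, ImprovedGain, Matrix.neg_mul,
    Matrix.mul_neg, neg_neg]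
  simp only [Matrix.mul_assoc]

lemma SolvesARE.sub_improvedGain_quadratic (hARE : SolvesARE A B Q R P) (hR : IsUnit R)
    (hRsymm : R.IsSymm) (hP : P.IsSymm) (K : Matrix (Fin m) (Fin n) ℝ) :
    (K - ImprovedGain A B R P)ᵀ * R * (K - ImprovedGain A B R P) =
      P * (A⁻¹ * (1 + B * K)) + (A⁻¹ * (1 + B * K))ᵀ * P + Q + Kᵀ * R * K := by
  set L := ImprovedGain A B R P
  have hleft : Lᵀ * R * K = -(P * A⁻¹ * B * K) := by
    rw [transpose_improvedGain_mul hR hRsymm hP, Matrix.neg_mul]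
  have hright : Kᵀ * R * L = -(Kᵀ * (Bᵀ * A⁻¹ᵀ * P)) := by
    rw [Matrix.mul_assoc, mul_improvedGain hR, Matrix.mul_neg]
  have hquad : Lᵀ * R * L = P * A⁻¹ + A⁻¹ᵀ * P + Q :=
    hARE.improvedGain_quadratic hR hRsymm hP
  have hclosed : A⁻¹ * (1 + B * K) = A⁻¹ + A⁻¹ * B * K := by
    rw [Matrix.mul_add, Matrix.mul_one, Matrix.mul_assoc]
  calc (K - L)ᵀ * R * (K - L)
      = Kᵀ * R * K - Kᵀ * R * L - Lᵀ * R * K + Lᵀ * R * L := by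
        simp only [transpose_sub, Matrix.sub_mul, Matrix.mul_sub]
        abel
    _ = P * (A⁻¹ * (1 + B * K)) + (A⁻¹ * (1 + B * K))ᵀ * P + Q + Kᵀ * R * K := by
        rw [hleft, hright, hquad, hclosed]
        simp only [transpose_mul, transpose_add, Matrix.mul_add, Matrix.add_mul,
          Matrix.mul_assoc]
        abel

lemma PolicyEval.lyapunov_sub_eq {Pstar : Matrix (Fin n) (Fin n) ℝ}
    (hPE : PolicyEval A B Q R K P) (hARE : SolvesARE A B Q R Pstar) (hR : IsUnit R)
    (hRsymm : R.IsSymm) (hPstar : Pstar.IsSymm) :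
    (P - Pstar) * (A⁻¹ * (1 + B * K)) + (A⁻¹ * (1 + B * K))ᵀ * (P - Pstar) =
      -((K - ImprovedGain A B R Pstar)ᵀ * R * (K - ImprovedGain A B R Pstar)) := by
  rw [hARE.sub_improvedGain_quadratic hR hRsymm hPstar K, ← zero_sub, ← hPE, Matrix.sub_mul,
    Matrix.mul_sub]
  abel

end Riccati

theorem riccati_solution_lower_bound_general {n m : ℕ}
    (A : Matrix (Fin n) (Fin n) ℝ) (B : Matrix (Fin n) (Fin m) ℝ)
    (Q : Matrix (Fin n) (Fin n) ℝ) (R : Matrix (Fin m) (Fin m) ℝ) (hR : R.PosDef)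
    (Pstar : Matrix (Fin n) (Fin n) ℝ) (hPstar : Pstar.IsSymm) (hARE : SolvesARE A B Q R Pstar)
    (K : Matrix (Fin m) (Fin n) ℝ) (P : Matrix (Fin n) (Fin n) ℝ)
    (hK : IsStabilizing A B K) (hPE : PolicyEval A B Q R K P) :
    (P - Pstar).PosSemidef := by
  refine hK.posSemidef_of_lyapunov ?_
  have hRsymm : R.IsSymm := isHermitian_iff_isSymm.mp hR.isHermitian
  rw [hPE.lyapunov_sub_eq hARE hR.isUnit hRsymm hPstar, neg_neg,
    ← conjTranspose_eq_transpose_of_trivial]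
  exact hR.posSemidef.conjTranspose_mul_mul_same _

/-- The Riccati solution is a Loewner lower bound: if `P* > 0` solves the
derivative-feedback ARE, then for every stabilizing gain `K` and every `P > 0`
solving the policy-evaluation equation for `K`, the matrix `P − P*` is
positive semidefinite. -/
theorem riccati_solution_lower_bound {n m : ℕ} (hn : 0 < n) (hm : 0 < m)
    (A : Matrix (Fin n) (Fin n) ℝ) (B : Matrix (Fin n) (Fin m) ℝ)
    (Q : Matrix (Fin n) (Fin n) ℝ) (R : Matrix (Fin m) (Fin m) ℝ)
    (hA : IsUnit A) (hQ : Q.PosSemidef) (hR : R.PosDef)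
    (Pstar : Matrix (Fin n) (Fin n) ℝ)
    (hPstar : Pstar.PosDef) (hARE : SolvesARE A B Q R Pstar) :
    ∀ (K : Matrix (Fin m) (Fin n) ℝ) (P : Matrix (Fin n) (Fin n) ℝ),
      IsStabilizing A B K → P.PosDef → PolicyEval A B Q R K P →
      (P - Pstar).PosSemidef := by
  intro K P hK _ hPE
  have hPstarSymm : Pstar.IsSymm := isHermitian_iff_isSymm.mp hPstar.isHermitian
  exact riccati_solution_lower_bound_general A B Q R hR Pstar hPstarSymm hARE K P hK hPE
end

section
/- Let P* be a symmetric positive definite solution of the derivative-feedback algebraic Riccati equation and suppose K* = −R⁻¹ Bᵀ A⁻ᵀ P* is a stabilizing derivative-feedback gain. Let x : ℝ → ℝⁿ be differentiable with x'(t) = (I + B·K*)⁻¹·A · x(t) for all t ≥ t₀ and x(t₀) = x₀, and let u(t) = −K* x'(t). Then the quadratic cost ∫_{t₀}^∞ ( x'(τ)ᵀ Q x'(τ) + u(τ)ᵀ R u(τ) ) dτ converges and equals x₀ᵀ P* x₀. -/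
open Matrix MeasureTheory Filter Topology

/-!
If `y' = M y` and `M` is annihilated by `∏ (X - μᵢ)`, peeling off one factor at a time reduces the
growth of `y` to that of scalar equations `f' = μ f + g`, so for Hurwitz `M` every trajectory decays
exponentially. The closed-loop matrix `M = (I + B K)⁻¹ A` has the inverse `N = A⁻¹ (I + B K)`, and
for `K = K*` the Riccati equation becomes `P N + Nᵀ P + Q + Kᵀ R K = 0`. Conjugating by `M` turns
this into a Lyapunov equation saying that `-xᵀ P x` is an antiderivative of the running cost along
trajectories; exponential decay makes the cost integrable and kills the boundary term at infinity.
-/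

open Polynomial Asymptotics

section ExponentialRate

theorem isBigO_exp_of_hasDerivAt {E : Type*} [NormedAddCommGroup E] [NormedSpace ℝ E] {a t₀ : ℝ}
    (ha : 0 < a) {f f' : ℝ → E} (hf : ∀ t ≥ t₀, HasDerivAt f (f' t) t)
    (hf' : f' =O[atTop] fun t => Real.exp (a * t)) : f =O[atTop] fun t => Real.exp (a * t) := by
  obtain ⟨C, hC⟩ := hf'.bound
  obtain ⟨T, hT⟩ := eventually_atTop.1 (hC.and (eventually_ge_atTop t₀))
  -- `D * exp (a * t)` dominates `‖f‖` at `T`, and its derivative dominates `‖f'‖` afterwards.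
  let D := max (C / a) (‖f T‖ / Real.exp (a * T))
  have hD_deriv (t : ℝ) : HasDerivAt (fun s => D * Real.exp (a * s)) (D * a * Real.exp (a * t)) t :=
    (((hasDerivAt_id' t).const_mul a).exp.const_mul D).congr_deriv (by ring)
  have hf'_le (t : ℝ) (ht : T ≤ t) : ‖f' t‖ ≤ D * a * Real.exp (a * t) := by
    have hCD : C ≤ D * a := (div_le_iff₀ ha).1 (le_max_left _ _)
    calc ‖f' t‖ ≤ C * Real.exp (a * t) := by simpa using (hT t ht).1
      _ ≤ D * a * Real.exp (a * t) := by gcongr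
  have hf_le (t : ℝ) (ht : T ≤ t) : ‖f t‖ ≤ D * Real.exp (a * t) :=
    image_norm_le_of_norm_deriv_right_le_deriv_boundary
      (fun s hs => (hf s (hT s hs.1).2).continuousAt.continuousWithinAt)
      (fun s hs => (hf s (hT s hs.1).2).hasDerivWithinAt)
      ((div_le_iff₀ (Real.exp_pos _)).1 (le_max_right _ _)) hD_deriv
      (fun s hs => hf'_le s hs.1) (Set.right_mem_Icc.2 ht)
  refine IsBigO.of_bound D ((eventually_ge_atTop T).mono fun t ht => ?_)
  simpa using hf_le t ht

variable {E : Type*} [NormedAddCommGroup E] [NormedSpace ℂ E] {c t₀ : ℝ}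

theorem hasDerivAt_cexp_neg_mul_smul {μ : ℂ} {f : ℝ → E} {v : E} {t : ℝ}
    (hf : HasDerivAt f (μ • f t + v) t) :
    HasDerivAt (fun s : ℝ => Complex.exp (-μ * s) • f s) (Complex.exp (-μ * t) • v) t := by
  have hexp : HasDerivAt (fun s : ℝ => Complex.exp (-μ * s)) (Complex.exp (-μ * t) * -μ) t := by
    simpa using (((hasDerivAt_id (t : ℂ)).const_mul (-μ)).cexp).comp_ofReal
  refine (hexp.smul hf).congr_deriv ?_
  module

theorem isBigO_cexp_mul_smul (μ : ℂ) {f : ℝ → E} (hf : f =O[atTop] fun t => Real.exp (c * t)) :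
    (fun t : ℝ => Complex.exp (μ * t) • f t) =O[atTop] fun t => Real.exp ((μ.re + c) * t) := by
  have hexp : (fun t : ℝ => Complex.exp (μ * t)) =O[atTop] fun t => Real.exp (μ.re * t) :=
    isBigO_of_le _ fun t => by simp [Complex.norm_exp]
  exact (hexp.smul hf).congr_right fun t => by rw [smul_eq_mul, ← Real.exp_add, add_mul]

theorem isBigO_exp_of_hasDerivAt_smul_add {μ : ℂ} (hμ : μ.re < c) {f g : ℝ → E}
    (hf : ∀ t ≥ t₀, HasDerivAt f (μ • f t + g t) t)
    (hg : g =O[atTop] fun t => Real.exp (c * t)) :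
    f =O[atTop] fun t => Real.exp (c * t) := by
  have hw : (fun t : ℝ => Complex.exp (-μ * t) • f t) =O[atTop]
      fun t => Real.exp (((-μ).re + c) * t) :=
    isBigO_exp_of_hasDerivAt (by simpa using hμ)
      (fun t ht => hasDerivAt_cexp_neg_mul_smul (hf t ht)) (isBigO_cexp_mul_smul (-μ) hg)
  refine (isBigO_cexp_mul_smul μ hw).congr (fun t => ?_) fun t => by simp
  rw [smul_smul, ← Complex.exp_add, neg_mul, add_neg_cancel, Complex.exp_zero, one_smul]

theorem isBigO_exp_of_aeval_prod_X_sub_C_apply_eq_zero (T : E →L[ℂ] E) {s : Multiset ℂ}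
    (hs : ∀ μ ∈ s, μ.re < c) {z : ℝ → E} (hz : ∀ t ≥ t₀, HasDerivAt z (T (z t)) t)
    (hsz : ∀ t ≥ t₀, aeval T (s.map (X - C ·)).prod (z t) = 0) :
    z =O[atTop] fun t => Real.exp (c * t) := by
  induction s using Multiset.induction generalizing z with
  | empty =>
    have hz_zero : z =ᶠ[atTop] 0 :=
      (eventually_ge_atTop t₀).mono fun t ht => by simpa using hsz t ht
    exact hz_zero.trans_isBigO (isBigO_zero _ _)
  | cons μ s ih =>
    rw [Multiset.forall_mem_cons] at hs
    -- `w = (T - μ) z` solves the same equation and is annihilated by the remaining factors.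
    let w : ℝ → E := fun t => T (z t) - μ • z t
    have hw : w =O[atTop] fun t => Real.exp (c * t) := by
      refine ih hs.2 (fun t ht => ?_) fun t ht => ?_
      · exact (((T.restrictScalars ℝ).hasFDerivAt.comp_hasDerivAt t (hz t ht)).sub
          ((hz t ht).const_smul μ)).congr_deriv (by simp [w])
      · have hszt := hsz t ht
        rw [Multiset.map_cons, Multiset.prod_cons, mul_comm, map_mul] at hszt
        simpa [w, Algebra.algebraMap_eq_smul_one] using hszt
    exact isBigO_exp_of_hasDerivAt_smul_add hs.1
      (fun t ht => (hz t ht).congr_deriv (by simp [w])) hw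

theorem isBigO_exp_of_hasDerivAt_mulVec {ι : Type*} [Fintype ι] [DecidableEq ι]
    {M : Matrix ι ι ℂ} (hM : ∀ μ ∈ spectrum ℂ M, μ.re < c) {z : ℝ → ι → ℂ}
    (hz : ∀ t ≥ t₀, HasDerivAt z (M *ᵥ z t) t) : z =O[atTop] fun t => Real.exp (c * t) := by
  let φ : Matrix ι ι ℂ ≃ₐ[ℂ] ((ι → ℂ) →L[ℂ] (ι → ℂ)) :=
    Matrix.toLinAlgEquiv'.trans (Module.End.toContinuousLinearMap (ι → ℂ))
  refine isBigO_exp_of_aeval_prod_X_sub_C_apply_eq_zero (φ M) (s := M.charpoly.roots)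
    (fun μ hμ => hM μ (mem_spectrum_iff_isRoot_charpoly.2 (isRoot_of_mem_roots hμ))) hz ?_
  intro t _
  rw [← (IsAlgClosed.splits M.charpoly).eq_prod_roots_of_monic M.charpoly_monic, aeval_algHom_apply,
    aeval_self_charpoly, map_zero]
  rfl

end ExponentialRate

namespace IsHurwitz

variable {n : ℕ} {M : Matrix (Fin n) (Fin n) ℝ}

theorem exists_neg_forall_re_lt (hM : IsHurwitz M) :
    ∃ c < 0, ∀ μ ∈ spectrum ℂ (M.map Complex.ofReal), μ.re < c := by
  have hlt : ∀ᶠ c in 𝓝[<] (0 : ℝ), ∀ μ ∈ spectrum ℂ (M.map Complex.ofReal), μ.re < c :=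
    (eventually_all_finite (finite_spectrum _)).2 fun μ hμ =>
      eventually_nhdsWithin_of_eventually_nhds (eventually_gt_nhds (hM μ hμ))
  exact (eventually_mem_nhdsWithin.and hlt).exists

theorem exists_isBigO_exp (hM : IsHurwitz M) {t₀ : ℝ} {x : ℝ → Fin n → ℝ}
    (hx : ∀ t ≥ t₀, HasDerivAt x (M *ᵥ x t) t) :
    ∃ c < 0, x =O[atTop] fun t => Real.exp (c * t) := by
  obtain ⟨c, hc, hMc⟩ := hM.exists_neg_forall_re_lt
  refine ⟨c, hc, ?_⟩
  have hz : (fun t i => (x t i : ℂ)) =O[atTop] fun t => Real.exp (c * t) := by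
    refine isBigO_exp_of_hasDerivAt_mulVec (t₀ := t₀) hMc fun t ht => hasDerivAt_pi.2 fun i => ?_
    refine ((hasDerivAt_pi.1 (hx t ht) i).ofReal_comp).congr_deriv ?_
    simp [mulVec, dotProduct]
  rw [isBigO_pi] at hz ⊢
  exact fun i => by simpa using (hz i).norm_left

end IsHurwitz

section DotProduct

variable {ι κ : Type*} [Fintype ι]

theorem hasDerivAt_dotProduct {𝕜 𝔸 : Type*} [NontriviallyNormedField 𝕜] [NormedRing 𝔸]
    [NormedAlgebra 𝕜 𝔸] {f g : 𝕜 → ι → 𝔸} {f' g' : ι → 𝔸} {t : 𝕜}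
    (hf : HasDerivAt f f' t) (hg : HasDerivAt g g' t) :
    HasDerivAt (fun s => f s ⬝ᵥ g s) (f' ⬝ᵥ g t + f t ⬝ᵥ g') t := by
  rw [hasDerivAt_pi] at hf hg
  simp only [dotProduct, ← Finset.sum_add_distrib]
  exact HasDerivAt.fun_sum fun i _ => (hf i).mul (hg i)

theorem hasDerivAt_mulVec [Finite κ] {𝕜 𝔸 : Type*} [NontriviallyNormedField 𝕜] [NormedRing 𝔸]
    [NormedAlgebra 𝕜 𝔸] (N : Matrix κ ι 𝔸) {f : 𝕜 → ι → 𝔸} {f' : ι → 𝔸} {t : 𝕜}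
    (hf : HasDerivAt f f' t) : HasDerivAt (fun s => N *ᵥ f s) (N *ᵥ f') t := by
  cases nonempty_fintype κ
  rw [hasDerivAt_pi] at hf ⊢
  exact fun i => HasDerivAt.fun_sum fun j _ => (hf j).const_mul _

theorem isBigO_dotProduct {α 𝔸 : Type*} [SeminormedRing 𝔸] {l : Filter α} {f g : α → ι → 𝔸}
    {a b : α → ℝ} (hf : f =O[l] a) (hg : g =O[l] b) :
    (fun s => f s ⬝ᵥ g s) =O[l] fun s => a s * b s :=
  IsBigO.fun_sum fun i _ => (isBigO_pi.1 hf i).mul (isBigO_pi.1 hg i)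

theorem isBigO_mulVec [Fintype κ] {α 𝔸 : Type*} [SeminormedRing 𝔸] {l : Filter α}
    (N : Matrix κ ι 𝔸) {f : α → ι → 𝔸} {a : α → ℝ} (hf : f =O[l] a) :
    (fun s => N *ᵥ f s) =O[l] a :=
  isBigO_pi.2 fun _ => IsBigO.fun_sum fun j _ => (isBigO_pi.1 hf j).const_mul_left _

theorem mulVec_dotProduct_mulVec_mulVec {S : Type*} [CommSemiring S] [Fintype κ]
    (N : Matrix κ ι S) (W : Matrix κ κ S) (v : ι → S) :
    (N *ᵥ v) ⬝ᵥ W *ᵥ (N *ᵥ v) = v ⬝ᵥ (Nᵀ * W * N) *ᵥ v := by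
  rw [← mulVec_mulVec, ← mulVec_mulVec, dotProduct_mulVec v Nᵀ, vecMul_transpose]

theorem dotProduct_mulVec_add_neg_mulVec_dotProduct_mulVec {S : Type*} [CommRing S] [Fintype κ]
    (Q : Matrix ι ι S) (R : Matrix κ κ S) (K : Matrix κ ι S) (v : ι → S) :
    v ⬝ᵥ Q *ᵥ v + -(K *ᵥ v) ⬝ᵥ R *ᵥ -(K *ᵥ v) = v ⬝ᵥ (Q + Kᵀ * R * K) *ᵥ v := by
  rw [mulVec_neg, neg_dotProduct_neg, mulVec_dotProduct_mulVec_mulVec, ← dotProduct_add,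
    ← add_mulVec]

end DotProduct

theorem IsHurwitz.integral_Ioi_dotProduct_mulVec {n : ℕ} {M P W : Matrix (Fin n) (Fin n) ℝ}
    (hM : IsHurwitz M) (hLyap : P * M + Mᵀ * P + W = 0) {t₀ : ℝ} {x : ℝ → Fin n → ℝ}
    (hx : ∀ t ≥ t₀, HasDerivAt x (M *ᵥ x t) t) :
    IntegrableOn (fun t => x t ⬝ᵥ W *ᵥ x t) (Set.Ioi t₀) ∧
      ∫ t in Set.Ioi t₀, x t ⬝ᵥ W *ᵥ x t = x t₀ ⬝ᵥ P *ᵥ x t₀ := by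
  obtain ⟨c, hc, hxc⟩ := hM.exists_isBigO_exp hx
  have hquad (N : Matrix (Fin n) (Fin n) ℝ) :
      (fun t => x t ⬝ᵥ N *ᵥ x t) =O[atTop] fun t => Real.exp (-(-(2 * c)) * t) := by
    refine (isBigO_dotProduct hxc (isBigO_mulVec N hxc)).congr_right fun t => ?_
    rw [← Real.exp_add]; congr 1; ring
  have hderiv : ∀ t ∈ Set.Ici t₀,
      HasDerivAt (fun s => -(x s ⬝ᵥ P *ᵥ x s)) (x t ⬝ᵥ W *ᵥ x t) t := by
    intro t ht
    refine (hasDerivAt_dotProduct (hx t ht) (hasDerivAt_mulVec P (hx t ht))).fun_neg.congr_deriv ?_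
    rw [eq_neg_of_add_eq_zero_right hLyap, neg_mulVec, dotProduct_neg, add_mulVec, dotProduct_add,
      ← mulVec_mulVec, ← mulVec_mulVec, dotProduct_mulVec _ Mᵀ, vecMul_transpose, add_comm]
  have hint : IntegrableOn (fun t => x t ⬝ᵥ W *ᵥ x t) (Set.Ioi t₀) := by
    refine integrable_of_isBigO_exp_neg (by linarith) (fun t ht => ?_) (hquad W)
    have hW : Continuous fun v => v ⬝ᵥ W *ᵥ v := by fun_prop
    exact hW.continuousAt.comp_continuousWithinAt (hx t ht).continuousAt.continuousWithinAt
  have hlim : Tendsto (fun t => -(x t ⬝ᵥ P *ᵥ x t)) atTop (𝓝 0) := by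
    have hexp : Tendsto (fun t => Real.exp (-(-(2 * c)) * t)) atTop (𝓝 0) :=
      Real.tendsto_exp_atBot.comp (tendsto_id.const_mul_atTop_of_neg (by linarith))
    simpa using ((hquad P).trans_tendsto hexp).neg
  refine ⟨hint, ?_⟩
  rw [integral_Ioi_of_hasDerivAt_of_tendsto' hderiv hint hlim, zero_sub, neg_neg]

section DerivativeFeedback

variable {n m : ℕ} {A : Matrix (Fin n) (Fin n) ℝ} {B : Matrix (Fin n) (Fin m) ℝ}
  {Q : Matrix (Fin n) (Fin n) ℝ} {R : Matrix (Fin m) (Fin m) ℝ}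

theorem SolvesARE.policyEval {P : Matrix (Fin n) (Fin n) ℝ} (hARE : SolvesARE A B Q R P)
    (hRsymm : R.IsSymm) (hR : IsUnit R) (hP : P.IsSymm) :
    PolicyEval A B Q R (ImprovedGain A B R P) P := by
  have hRinv : R⁻¹ * R = 1 := nonsing_inv_mul _ ((isUnit_iff_isUnit_det R).1 hR)
  have hRinv_symm : R⁻¹ᵀ = R⁻¹ := by rw [transpose_nonsing_inv, hRsymm.eq]
  have hgain : (ImprovedGain A B R P)ᵀ = -(P * A⁻¹ * B * R⁻¹) := by
    simp only [ImprovedGain, transpose_neg, transpose_mul, transpose_transpose, hP.eq, hRinv_symm,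
      Matrix.mul_assoc]
  have hgain_mul : (ImprovedGain A B R P)ᵀ * R = -(P * A⁻¹ * B) := by
    rw [hgain, Matrix.neg_mul, Matrix.mul_assoc _ R⁻¹, hRinv, Matrix.mul_one]
  rw [PolicyEval, hgain_mul, ← hARE]
  simp only [transpose_mul, transpose_add, transpose_one, hgain]
  simp only [ImprovedGain, Matrix.mul_add, Matrix.add_mul, Matrix.mul_neg, Matrix.neg_mul,
    Matrix.mul_one, Matrix.one_mul, Matrix.mul_assoc]
  abel

theorem PolicyEval.lyapunov {K : Matrix (Fin m) (Fin n) ℝ} {P : Matrix (Fin n) (Fin n) ℝ}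
    (hP : PolicyEval A B Q R K P) (hA : IsUnit A) (hK : IsUnit (1 + B * K)) :
    P * ((1 + B * K)⁻¹ * A) + ((1 + B * K)⁻¹ * A)ᵀ * P +
      ((1 + B * K)⁻¹ * A)ᵀ * (Q + Kᵀ * R * K) * ((1 + B * K)⁻¹ * A) = 0 := by
  set M := (1 + B * K)⁻¹ * A with hM
  set N := A⁻¹ * (1 + B * K) with hN
  have hNM : N * M = 1 := by
    rw [hN, hM, Matrix.mul_assoc, mul_nonsing_inv_cancel_left _ _ ((isUnit_iff_isUnit_det _).1 hK),
      nonsing_inv_mul _ ((isUnit_iff_isUnit_det A).1 hA)]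
  have hMN : Mᵀ * Nᵀ = 1 := by rw [← transpose_mul, hNM, transpose_one]
  calc P * M + Mᵀ * P + Mᵀ * (Q + Kᵀ * R * K) * M
      = Mᵀ * Nᵀ * P * M + Mᵀ * P * (N * M) + Mᵀ * (Q + Kᵀ * R * K) * M := by
        rw [hNM, hMN, Matrix.one_mul, Matrix.mul_one]
    _ = Mᵀ * (P * N + Nᵀ * P + Q + Kᵀ * R * K) * M := by noncomm_ring
    _ = 0 := by rw [show P * N + Nᵀ * P + Q + Kᵀ * R * K = 0 from hP, Matrix.mul_zero,
        Matrix.zero_mul]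

theorem PolicyEval.integral_cost {K : Matrix (Fin m) (Fin n) ℝ} {P : Matrix (Fin n) (Fin n) ℝ}
    (hP : PolicyEval A B Q R K P) (hA : IsUnit A) (hK : IsStabilizing A B K) {t₀ : ℝ}
    {x : ℝ → Fin n → ℝ} (hx : ∀ t ≥ t₀, HasDerivAt x (((1 + B * K)⁻¹ * A) *ᵥ x t) t)
    {u : ℝ → Fin m → ℝ} (hu : ∀ t > t₀, u t = -(K *ᵥ deriv x t)) :
    IntegrableOn (fun t => deriv x t ⬝ᵥ Q *ᵥ deriv x t + u t ⬝ᵥ R *ᵥ u t) (Set.Ioi t₀) ∧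
      ∫ t in Set.Ioi t₀, (deriv x t ⬝ᵥ Q *ᵥ deriv x t + u t ⬝ᵥ R *ᵥ u t) =
        x t₀ ⬝ᵥ P *ᵥ x t₀ := by
  obtain ⟨hint, hintegral⟩ := hK.2.integral_Ioi_dotProduct_mulVec (hP.lyapunov hA hK.1) hx
  have hcost (t : ℝ) (ht : t ∈ Set.Ioi t₀) : deriv x t ⬝ᵥ Q *ᵥ deriv x t + u t ⬝ᵥ R *ᵥ u t =
      x t ⬝ᵥ (((1 + B * K)⁻¹ * A)ᵀ * (Q + Kᵀ * R * K) * ((1 + B * K)⁻¹ * A)) *ᵥ x t :=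
    calc deriv x t ⬝ᵥ Q *ᵥ deriv x t + u t ⬝ᵥ R *ᵥ u t
        = deriv x t ⬝ᵥ (Q + Kᵀ * R * K) *ᵥ deriv x t := by
          rw [hu t ht, dotProduct_mulVec_add_neg_mulVec_dotProduct_mulVec]
      _ = x t ⬝ᵥ (((1 + B * K)⁻¹ * A)ᵀ * (Q + Kᵀ * R * K) * ((1 + B * K)⁻¹ * A)) *ᵥ x t := by
          rw [(hx t (le_of_lt ht)).deriv, mulVec_dotProduct_mulVec_mulVec]
  exact ⟨hint.congr_fun (fun t ht => (hcost t ht).symm) measurableSet_Ioi,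
    (setIntegral_congr_fun measurableSet_Ioi hcost).trans hintegral⟩

theorem optimal_cost_equals_riccati_general {P : Matrix (Fin n) (Fin n) ℝ}
    (hA : IsUnit A) (hRsymm : R.IsSymm) (hR : IsUnit R) (hP : P.IsSymm)
    (hARE : SolvesARE A B Q R P) (hK : IsStabilizing A B (ImprovedGain A B R P)) {t₀ : ℝ}
    {x : ℝ → Fin n → ℝ}
    (hx : ∀ t ≥ t₀, HasDerivAt x (((1 + B * ImprovedGain A B R P)⁻¹ * A) *ᵥ x t) t)
    {u : ℝ → Fin m → ℝ} (hu : ∀ t > t₀, u t = -(ImprovedGain A B R P *ᵥ deriv x t)) :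
    IntegrableOn (fun t => deriv x t ⬝ᵥ Q *ᵥ deriv x t + u t ⬝ᵥ R *ᵥ u t) (Set.Ioi t₀) ∧
      ∫ t in Set.Ioi t₀, (deriv x t ⬝ᵥ Q *ᵥ deriv x t + u t ⬝ᵥ R *ᵥ u t) =
        x t₀ ⬝ᵥ P *ᵥ x t₀ :=
  (hARE.policyEval hRsymm hR hP).integral_cost hA hK hx hu

end DerivativeFeedback

/-- Optimal cost of the Riccati gain: if `P* > 0` solves the derivative-feedback
ARE and `K* = −R⁻¹ Bᵀ A⁻ᵀ P*` is stabilizing, then along the closed-loop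
trajectory starting at `x₀` at time `t₀`, with `u = −K* x'`, the quadratic cost
`∫_{t₀}^∞ (x'ᵀ Q x' + uᵀ R u) dτ` converges and equals `x₀ᵀ P* x₀`. -/
theorem optimal_cost_equals_riccati {n m : ℕ} (hn : 0 < n) (hm : 0 < m)
    (A : Matrix (Fin n) (Fin n) ℝ) (B : Matrix (Fin n) (Fin m) ℝ)
    (Q : Matrix (Fin n) (Fin n) ℝ) (R : Matrix (Fin m) (Fin m) ℝ)
    (hA : IsUnit A) (hQ : Q.PosSemidef) (hR : R.PosDef)
    (Pstar : Matrix (Fin n) (Fin n) ℝ)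
    (hPstar : Pstar.PosDef) (hARE : SolvesARE A B Q R Pstar)
    (hKstar : IsStabilizing A B (ImprovedGain A B R Pstar))
    (t₀ : ℝ) (x₀ : Fin n → ℝ) (x : ℝ → Fin n → ℝ)
    (hx : ∀ t : ℝ, t₀ ≤ t →
      HasDerivAt x (((1 + B * ImprovedGain A B R Pstar)⁻¹ * A).mulVec (x t)) t)
    (hx₀ : x t₀ = x₀)
    (u : ℝ → Fin m → ℝ)
    (hu : ∀ t : ℝ, u t = -(ImprovedGain A B R Pstar).mulVec (deriv x t)) :
    IntegrableOn
      (fun τ => deriv x τ ⬝ᵥ Q.mulVec (deriv x τ) + u τ ⬝ᵥ R.mulVec (u τ))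
      (Set.Ioi t₀) ∧
    ∫ τ in Set.Ioi t₀,
        (deriv x τ ⬝ᵥ Q.mulVec (deriv x τ) + u τ ⬝ᵥ R.mulVec (u τ)) =
      x₀ ⬝ᵥ Pstar.mulVec x₀ := by
  subst hx₀
  exact optimal_cost_equals_riccati_general hA (isHermitian_iff_isSymm.1 hR.isHermitian)
    hR.isUnit (isHermitian_iff_isSymm.1 hPstar.isHermitian) hARE hKstar hx fun t _ => hu t
end
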